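/- arXiv:2009.11670 — 4 statements merged into one kernel-verified Lean document; each statement's English description precedes it below -/
import Mathlib

section
/- Let X be a topological space, n and k natural numbers, and P a partition of Fin n (a Finpartition of the full finset of Fin n) with exactly k blocks. Then the subspace F(X,P) = {x : Fin n → X | for all i j, x i = x j if and only if i and j lie in the same block of P} of the product space Fin n → X is homeomorphic to the ordered configuration space F(X,k) = {y : Fin k → X | y is injective}, endowed with the subspace topology of the product topology. -/
/-!
Precomposition with a surjection `q : ι → κ` embeds `κ → X` in `ι → X`. A tuple `y` is injective
exactly when `y ∘ q` has the same coincidences among its coordinates as `q`, and every tuple with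
those coincidences factors through `q`. Taking for `q` the map sending an index to its block gives
the homeomorphism.
-/

open Function Topology

section Stratum

variable {ι κ X : Type*}

/-- The set `F(X, r)` of tuples in `X` whose coordinates coincide exactly along the equivalence
relation `r`. A partition is encoded by the relation of lying in the same block; the
discrete relation `⊥` gives the ordered configuration space. -/
def configurationStratum (X : Type*) (r : Setoid ι) : Set (ι → X) :=
  {x | Setoid.ker x = r}

theorem mem_configurationStratum_iff {r : Setoid ι} {x : ι → X} :
    x ∈ configurationStratum X r ↔ ∀ i j, x i = x j ↔ r i j :=
  Setoid.ext_iff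

theorem configurationStratum_bot :
    configurationStratum X (⊥ : Setoid κ) = {y | Injective y} :=
  Set.ext fun _ => Setoid.ker_eq_bot_iff

theorem preimage_comp_configurationStratum_comap {q : ι → κ} (hq : Surjective q) (r : Setoid κ) :
    (· ∘ q) ⁻¹' configurationStratum X (r.comap q) = configurationStratum X r := by
  ext y
  simp only [Set.mem_preimage, mem_configurationStratum_iff, Setoid.comap_rel, comp_apply,
    hq.forall]

theorem configurationStratum_comap_subset_range_comp {q : ι → κ} (hq : Surjective q)
    (r : Setoid κ) : configurationStratum X (r.comap q) ⊆ Set.range (· ∘ q) := by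
  intro x hx
  refine ⟨x ∘ surjInv hq, funext fun i => (mem_configurationStratum_iff.1 hx _ _).2 ?_⟩
  rw [Setoid.comap_rel, surjInv_eq hq]

/-- The homeomorphism `F(X, r) ≃ₜ F(X, q⁻¹ r)` given by precomposition with a surjection `q`. It
reduces every stratum to a configuration space, on taking `r = ⊥`. -/
noncomputable def configurationStratumHomeomorphComap [TopologicalSpace X] {q : ι → κ}
    (hq : Surjective q) (r : Setoid κ) :
    configurationStratum X r ≃ₜ configurationStratum X (r.comap q) :=
  (Homeomorph.setCongr (preimage_comp_configurationStratum_comap hq r).symm).trans <|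
    (hq.isEmbedding_comp q).homeomorphOfSubsetRange
      (configurationStratum_comap_subset_range_comp hq r)

theorem nonempty_configurationStratum_homeomorph_injective [TopologicalSpace X] {r : Setoid ι}
    (e : Quotient r ≃ κ) :
    Nonempty (configurationStratum X r ≃ₜ {y : κ → X // Injective y}) := by
  have hq : Surjective (e ∘ Quotient.mk r) := e.surjective.comp Quotient.mk_surjective
  have hr : (⊥ : Setoid κ).comap (e ∘ Quotient.mk r) = r :=
    Setoid.ext fun _ _ => e.apply_eq_iff_eq.trans Quotient.eq
  have h := configurationStratumHomeomorphComap (X := X) hq ⊥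
  rw [hr, configurationStratum_bot] at h
  exact ⟨h.symm⟩

end Stratum

theorem isPartition_coe_image_parts {α : Type*} [Fintype α] [DecidableEq α]
    (P : Finpartition (Finset.univ : Finset α)) :
    Setoid.IsPartition ((↑) '' (P.parts : Set (Finset α)) : Set (Set α)) := by
  refine ⟨?_, fun a => ?_⟩
  · rintro ⟨s, hs, hs_empty⟩
    exact P.ne_empty hs (Finset.coe_eq_empty.1 hs_empty)
  · obtain ⟨s, ⟨hs, has⟩, hunique⟩ := P.existsUnique_mem (Finset.mem_univ a)
    refine ⟨s, ⟨Set.mem_image_of_mem _ hs, has⟩, ?_⟩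
    rintro _ ⟨⟨t, ht, rfl⟩, hat⟩
    exact congrArg _ (hunique t ⟨ht, hat⟩)

theorem stmt1_general (X : Type*) [TopologicalSpace X] {ι κ : Type*} {c : Set (Set ι)}
    (hc : Setoid.IsPartition c) (e : c ≃ κ) :
    Nonempty
      (({x : ι → X // ∀ i j, x i = x j ↔ ∃ s ∈ c, i ∈ s ∧ j ∈ s}) ≃ₜ
        ({y : κ → X // Injective y})) := by
  obtain ⟨r, rfl⟩ : ∃ r : Setoid ι, r.classes = c := ⟨_, Setoid.classes_mkClasses c hc⟩
  have hmem (x : ι → X) : (∀ i j, x i = x j ↔ ∃ s ∈ r.classes, i ∈ s ∧ j ∈ s) ↔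
      x ∈ configurationStratum X r := by
    simp only [mem_configurationStratum_iff, Setoid.rel_iff_exists_classes]
  exact (nonempty_configurationStratum_homeomorph_injective (r.quotientEquivClasses.trans e)).map
    ((Homeomorph.refl _).subtype hmem).trans

/-- For a topological space `X` and a partition `P` of `Fin n` with exactly `k`
blocks, the subspace `F(X, P)` of `Fin n → X` of tuples whose coordinates `i, j` coincide
exactly when `i` and `j` lie in the same block of `P` is homeomorphic to the ordered
configuration space `F(X, k)` of injective tuples `Fin k → X`. -/
theorem stmt1 (X : Type*) [TopologicalSpace X] (n k : ℕ)
    (P : Finpartition (Finset.univ : Finset (Fin n))) (hP : P.parts.card = k) :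
    Nonempty
      (({x : Fin n → X // ∀ i j, x i = x j ↔ ∃ s ∈ P.parts, i ∈ s ∧ j ∈ s}) ≃ₜ
        ({y : Fin k → X // Function.Injective y})) := by
  let e : ((↑) '' (P.parts : Set (Finset (Fin n))) : Set (Set (Fin n))) ≃ Fin k :=
    (Equiv.Set.image _ _ Finset.coe_injective).symm.trans (P.parts.equivFinOfCardEq hP)
  exact (stmt1_general X (isPartition_coe_image_parts P) e).map
    ((Homeomorph.refl _).subtype fun _ => by simp).trans
end

section
/- Let X be a Hausdorff (T2) topological space and n a natural number. Let F(X,n) = {f : Fin n → X | f is injective} with the subspace topology of the product topology, acted on by Equiv.Perm (Fin n) via (σ • f)(i) = f(σ⁻¹ i), and let B(X,n) be the quotient topological space of F(X,n) by the orbit equivalence relation of this action. Then the quotient map F(X,n) → B(X,n) is a covering map. -/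
/-- The ordered configuration space `F(X,n)` of `n` distinct labeled points in `X`,
topologized as a subspace of the product `Fin n → X`. -/
def ConfSpace (X : Type*) (n : ℕ) : Type _ := {f : Fin n → X // Function.Injective f}

instance (X : Type*) [TopologicalSpace X] (n : ℕ) : TopologicalSpace (ConfSpace X n) :=
  instTopologicalSpaceSubtype

/-- The symmetric group `𝔖_n = Equiv.Perm (Fin n)` acts on `F(X,n)` by permuting the
coordinates: `(σ • f) i = f (σ⁻¹ i)`. -/
instance confSpaceMulAction (X : Type*) (n : ℕ) :
    MulAction (Equiv.Perm (Fin n)) (ConfSpace X n) where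
  smul σ f := ⟨f.1 ∘ ⇑σ⁻¹, f.2.comp (Equiv.injective _)⟩
  one_smul f := Subtype.ext (by
    show f.1 ∘ ⇑(1 : Equiv.Perm (Fin n))⁻¹ = f.1
    ext i
    simp)
  mul_smul σ τ f := Subtype.ext (by
    show f.1 ∘ ⇑(σ * τ)⁻¹ = (f.1 ∘ ⇑τ⁻¹) ∘ ⇑σ⁻¹
    ext i
    simp [mul_inv_rev, Function.comp])

/-!
A finite group acting freely by homeomorphisms on a Hausdorff space `E` always yields a covering
`E → E / G`: a point is separated from each of its finitely many other translates, and intersecting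
the resulting neighborhoods gives one that is disjoint from all its own nontrivial translates.
This avoids the local compactness that Mathlib's criterion for properly discontinuous actions
requires. The symmetric group acts freely on `F(X,n)` because a permutation fixing an injective
function is trivial.
-/

section FiniteAction

open scoped Topology

variable {G E : Type*} [TopologicalSpace E] [T2Space E]

theorem exists_nhds_image_inter_nonempty_imp_eq {f : E → E} {x : E} (hf : ContinuousAt f x) :
    ∃ U ∈ 𝓝 x, (f '' U ∩ U).Nonempty → f x = x := by
  by_cases hx : f x = x
  · exact ⟨Set.univ, Filter.univ_mem, fun _ ↦ hx⟩
  obtain ⟨V, W, hV, hW, hVW⟩ := t2_separation_nhds hx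
  refine ⟨f ⁻¹' V ∩ W, Filter.inter_mem (hf hV) hW, ?_⟩
  rintro ⟨_, ⟨y, ⟨hyV, -⟩, rfl⟩, -, hyW⟩
  exact (Set.disjoint_left.mp hVW hyV hyW).elim

theorem exists_nhds_forall_image_smul_inter_nonempty_imp_eq [Finite G] [SMul G E]
    [ContinuousConstSMul G E] (x : E) :
    ∃ U ∈ 𝓝 x, ∀ g : G, ((g • ·) '' U ∩ U).Nonempty → g • x = x := by
  choose U hU hUx using fun g : G ↦
    exists_nhds_image_inter_nonempty_imp_eq (continuous_const_smul g).continuousAt (x := x)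
  refine ⟨⋂ g, U g, Filter.iInter_mem.mpr hU, fun g hg ↦ hUx g (hg.mono ?_)⟩
  have hUg : ⋂ h, U h ⊆ U g := Set.iInter_subset U g
  exact Set.inter_subset_inter (Set.image_mono hUg) hUg

theorem isQuotientCoveringMap_quotientMk_of_finite [Group G] [Finite G] [MulAction G E]
    [ContinuousConstSMul G E] [IsCancelSMul G E] :
    IsQuotientCoveringMap (Quotient.mk (MulAction.orbitRel G E)) G where
  toIsQuotientMap := isQuotientMap_quotient_mk'
  continuous_const_smul := continuous_const_smul
  apply_eq_iff_mem_orbit := Quotient.eq''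
  disjoint x := by
    obtain ⟨U, hU, hUx⟩ := exists_nhds_forall_image_smul_inter_nonempty_imp_eq (G := G) x
    exact ⟨U, hU, fun g hg ↦ IsCancelSMul.eq_one_of_smul (hUx g hg)⟩

end FiniteAction

namespace ConfSpace

variable {X : Type*} {n : ℕ}

instance isCancelSMul : IsCancelSMul (Equiv.Perm (Fin n)) (ConfSpace X n) :=
  isCancelSMul_iff_eq_one_of_smul_eq.mpr fun σ f hσ ↦ by
    have hcomp : f.1 ∘ ⇑σ⁻¹ = f.1 := congrArg Subtype.val hσ
    have hinv : σ⁻¹ = 1 := Equiv.ext fun i ↦ f.2 (congrFun hcomp i)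
    exact inv_eq_one.mp hinv

variable [TopologicalSpace X]

instance t2Space [T2Space X] : T2Space (ConfSpace X n) :=
  inferInstanceAs (T2Space {f : Fin n → X // Function.Injective f})

instance continuousConstSMul :
    ContinuousConstSMul (Equiv.Perm (Fin n)) (ConfSpace X n) where
  continuous_const_smul σ :=
    ((Pi.continuous_precomp ⇑σ⁻¹).comp continuous_subtype_val).subtype_mk _

end ConfSpace

/-- For a Hausdorff space `X`, the quotient map from the ordered
configuration space `F(X,n)` to the unordered configuration space
`B(X,n) = F(X,n)/𝔖_n` is a covering map. -/
theorem stmt10 (X : Type*) [TopologicalSpace X] [T2Space X] (n : ℕ) :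
    IsCoveringMap
      (Quotient.mk (MulAction.orbitRel (Equiv.Perm (Fin n)) (ConfSpace X n))) :=
  isQuotientCoveringMap_quotientMk_of_finite.isCoveringMap
end

section
/- Let X be a topological space, n a natural number, and q : Fin n → X an injective function. Consider the projection π : F(X,n+1) → F(X,n) sending an injective f : Fin (n+1) → X to its restriction f ∘ Fin.castSucc along the inclusion Fin n ↪ Fin (n+1). Then the fiber π⁻¹(q) = {f ∈ F(X,n+1) | f ∘ Fin.castSucc = q}, with the subspace topology, is homeomorphic to the subspace X \ {q(0),...,q(n−1)} = {x : X | x ∉ Set.range q}, via the map sending f to its value at the last element of Fin (n+1). -/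
/- A configuration indexed by `κ` is its restriction to `κ \ {p}` together with its value at `p`,
and the only constraint linking the two is that this value avoids the points of the restriction.
Hence evaluation at `p` is a bijection from the fibre over `q` to the complement of the points of
`q`. Its inverse is continuous because each coordinate of the extended configuration is either
constant or the added point itself. -/

open Function Set

/-- The space of ordered configurations of points of `X` labelled by `ι`, topologized as a subspace
of the product `ι → X`. Labels range over an arbitrary type; `F(X, n)` is the case `ι = Fin n`. -/
abbrev OrderedConfigurationSpace (ι X : Type*) : Type _ :=
  {f : ι → X // Injective f}

theorem continuous_extend {ι κ X : Type*} [TopologicalSpace X] (e : ι → κ) :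
    Continuous fun g : (ι → X) × (κ → X) ↦ extend e g.1 g.2 := by
  classical
  refine continuous_pi fun k ↦ ?_
  by_cases hk : ∃ i, e i = k
  · simp only [extend_def, dif_pos hk]
    fun_prop
  · simp only [extend_def, dif_neg hk]
    fun_prop

section RangeEqComplSingleton

variable {ι κ X : Type*} {e : ι → κ} {p : κ}

theorem injective_iff_of_range_eq_compl_singleton (he : Injective e) (hrange : range e = {p}ᶜ)
    {f : κ → X} : Injective f ↔ Injective (f ∘ e) ∧ f p ∉ range (f ∘ e) := by
  have hp : p ∉ range e := by simp [hrange]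
  have huniv : insert p (range e) = univ := by rw [hrange, insert_eq, union_compl_self]
  have hinj : InjOn f (range e) ↔ Injective (f ∘ e) :=
    ⟨fun h ↦ (h.injective_iff _ Subset.rfl).2 he, Injective.injOn_range⟩
  rw [← injOn_univ, ← huniv, injOn_insert hp, hinj, range_comp]

theorem extend_const_apply_of_range_eq_compl_singleton (hrange : range e = {p}ᶜ)
    (q : ι → X) (x : X) : extend e q (const κ x) p = x := by
  have hp : p ∉ range e := by simp [hrange]
  exact extend_apply' q _ p hp

theorem extend_comp_const_of_range_eq_compl_singleton (he : Injective e)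
    (hrange : range e = {p}ᶜ) (f : κ → X) : extend e (f ∘ e) (const κ (f p)) = f := by
  ext k
  obtain rfl | hk := eq_or_ne k p
  · exact extend_const_apply_of_range_eq_compl_singleton hrange _ _
  · obtain ⟨i, rfl⟩ : k ∈ range e := by simpa [hrange] using hk
    exact he.extend_apply _ _ i

theorem injective_extend_const_of_range_eq_compl_singleton (he : Injective e)
    (hrange : range e = {p}ᶜ) {q : ι → X} (hq : Injective q) {x : X} (hx : x ∉ range q) :
    Injective (extend e q (const κ x)) := by
  rw [injective_iff_of_range_eq_compl_singleton he hrange, extend_comp he,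
    extend_const_apply_of_range_eq_compl_singleton hrange]
  exact ⟨hq, hx⟩

end RangeEqComplSingleton

namespace OrderedConfigurationSpace

variable {ι κ X : Type*} {e : ι → κ} {p : κ} {q : ι → X}

/-- The fibre over `q` of the map `f ↦ f ∘ e` forgetting the point labelled `p`, identified with the
complement of the points of `q` by evaluation at `p`. That `p` is the only forgotten label is
encoded as `range e = {p}ᶜ`. -/
noncomputable def fiberEquiv (he : Injective e) (hrange : range e = {p}ᶜ) (hq : Injective q) :
    {f : OrderedConfigurationSpace κ X // f.1 ∘ e = q} ≃ {x : X // x ∉ range q} where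
  toFun f := ⟨f.1.1 p, by
    simpa only [f.2] using ((injective_iff_of_range_eq_compl_singleton he hrange).1 f.1.2).2⟩
  invFun x := ⟨⟨extend e q (const κ x.1),
    injective_extend_const_of_range_eq_compl_singleton he hrange hq x.2⟩, extend_comp he _ _⟩
  left_inv f := Subtype.ext <| Subtype.ext <| by
    simpa only [f.2] using extend_comp_const_of_range_eq_compl_singleton he hrange f.1.1
  right_inv x := Subtype.ext <| extend_const_apply_of_range_eq_compl_singleton hrange q x.1

/-- `fiberEquiv` as a homeomorphism: the fibre of the map forgetting one point of a configuration is
the space with the remaining points removed. -/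
noncomputable def fiberHomeomorph [TopologicalSpace X] (he : Injective e)
    (hrange : range e = {p}ᶜ) (hq : Injective q) :
    {f : OrderedConfigurationSpace κ X // f.1 ∘ e = q} ≃ₜ {x : X // x ∉ range q} where
  toEquiv := fiberEquiv he hrange hq
  continuous_toFun :=
    ((continuous_apply p).comp (continuous_subtype_val.comp continuous_subtype_val)).subtype_mk _
  continuous_invFun := by
    have hpair : Continuous fun x : {x : X // x ∉ range q} ↦ (q, const κ x.1) :=
      continuous_const.prodMk (continuous_pi fun _ ↦ continuous_subtype_val)
    exact (((continuous_extend e).comp hpair).subtype_mk _).subtype_mk _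

end OrderedConfigurationSpace

theorem stmt11_general {ι κ X : Type*} [TopologicalSpace X] {e : ι → κ} (he : Injective e) {p : κ}
    (hrange : range e = {p}ᶜ) {q : ι → X} (hq : Injective q) :
    ∃ h : {f : OrderedConfigurationSpace κ X // f.1 ∘ e = q} ≃ₜ {x : X // x ∉ range q},
      ∀ f, (h f).1 = f.1.1 p :=
  ⟨OrderedConfigurationSpace.fiberHomeomorph he hrange hq, fun _ ↦ rfl⟩

/-- For a topological space `X` and an injective `q : Fin n → X`, the fiber
over `q` of the projection `F(X,n+1) → F(X,n)`, `f ↦ f ∘ Fin.castSucc`, is homeomorphic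
to the complement `{x : X | x ∉ Set.range q}` of the configuration `q`, via evaluation at
the last element of `Fin (n+1)`. -/
theorem stmt11 (X : Type*) [TopologicalSpace X] (n : ℕ) (q : Fin n → X)
    (hq : Function.Injective q) :
    ∃ h : {f : {f : Fin (n + 1) → X // Function.Injective f} // f.1 ∘ Fin.castSucc = q} ≃ₜ
          {x : X // x ∉ Set.range q},
      ∀ f, (h f).1 = f.1.1 (Fin.last n) :=
  stmt11_general (Fin.castSucc_injective n)
    (by rw [← Fin.succAbove_last, Fin.range_succAbove]) hq
end

section
/- Let G be a finite group and V a finite-dimensional complex representation of G (an object of FDRep ℂ G) whose character vanishes at every non-identity element, i.e., Tr(ρ_V(g)) = 0 for all g ≠ 1. Then the cardinality of G divides the dimension dim_ℂ V, and V is isomorphic as a representation of G to the direct sum of (dim_ℂ V)/|G| copies of the left regular representation of G, namely the representation of G on the function space G → ℂ where g acts by precomposition with left translation by g⁻¹. -/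
open Module

/-- The direct sum of `m` copies of the left regular representation of `G` over `ℂ`: the
representation of `G` on `Fin m → (G → ℂ)` where `g` acts on each copy of the function
space `G → ℂ` by precomposition with left translation by `g⁻¹`. -/
def regRepPow (G : Type) [Group G] (m : ℕ) : Representation ℂ G (Fin m → G → ℂ) where
  toFun g :=
    { toFun := fun f i x => f i (g⁻¹ * x)
      map_add' := fun _ _ => rfl
      map_smul' := fun _ _ => rfl }
  map_one' := LinearMap.ext fun f => funext fun i => funext fun x => by simp
  map_mul' g h := LinearMap.ext fun f => funext fun i => funext fun x => by
    simp [mul_assoc]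

/-!
The idea is to compare two modules only through the dimensions of the spaces of maps into them.
Averaging the product of two characters computes `dim Hom_G(τ, ρ)`, so if `ρ` and `σ` have the same
character, then `Hom_G(τ, ρ)` and `Hom_G(τ, σ)` have the same dimension for every `τ`.

Take an equivariant map `f : M → N` with minimal kernel `K`, and suppose `K ≠ 0`. Composing with `f`
gives a map `Hom(K, M) → Hom(K, N)` that kills the inclusion of `K`, so by the equality of
dimensions it is not surjective. By semisimplicity some map `K → N` then has image outside the range
of `f`; projecting it to a complement of that range and adding it to `f` gives a map with smaller
kernel. Hence `f` is injective, and it is bijective when `M` and `N` have the same dimension.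

Averaging a character `χ` that vanishes off `1` gives `dim V = |G| dim V^G`, which is the
divisibility, and then `χ` is the character of a sum of copies of the regular representation.
-/

universe u

section Embedding

variable {k R M N : Type*} [Field k] [Ring R] [Algebra k R]
  [AddCommGroup M] [Module R M] [AddCommGroup N] [Module R N]

lemma ker_add_subtype_comp_lt_ker {f : M →ₗ[R] N} {p : M →ₗ[R] LinearMap.ker f}
    (hp : ∀ x : LinearMap.ker f, p x = x) {C : Submodule R N}
    (hC : Disjoint (LinearMap.range f) C) {g : LinearMap.ker f →ₗ[R] C} (hg : g ≠ 0) :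
    LinearMap.ker (f + C.subtype ∘ₗ g ∘ₗ p) < LinearMap.ker f := by
  refine lt_of_le_of_ne (fun x hx => ?_) fun heq => hg (LinearMap.ext fun x => ?_)
  · have hsum : f x = -(g (p x) : N) := eq_neg_of_add_eq_zero_left hx
    have hmem : f x ∈ C := by rw [hsum]; exact C.neg_mem (g (p x)).2
    exact Submodule.disjoint_def.1 hC (f x) ⟨x, rfl⟩ hmem
  · have hx : (x : M) ∈ LinearMap.ker (f + C.subtype ∘ₗ g ∘ₗ p) := heq.ge x.2
    simpa [hp, LinearMap.mem_ker.1 x.2] using hx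

variable [Module k M] [IsScalarTower k R M] [Module k N] [IsScalarTower k R N]
  [IsSemisimpleModule R M] [Module.Finite k (M →ₗ[R] M)] [Module.Finite k (M →ₗ[R] N)]

lemma exists_linearMap_ker_not_range_le_range {f : M →ₗ[R] N} (hf : LinearMap.ker f ≠ ⊥)
    (hfinrank : finrank k (LinearMap.ker f →ₗ[R] M) ≤ finrank k (LinearMap.ker f →ₗ[R] N)) :
    ∃ g : LinearMap.ker f →ₗ[R] N, ¬ LinearMap.range g ≤ LinearMap.range f := by
  by_contra! hrange
  have hsurj : Function.Surjective (LinearMap.compRight k (M := LinearMap.ker f) f) := fun g => by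
    obtain ⟨h, hh⟩ := IsSemisimpleModule.lifting_property f.rangeRestrict
      f.surjective_rangeRestrict (g.codRestrict _ fun x => hrange g ⟨x, rfl⟩)
    exact ⟨h, LinearMap.ext fun x => congr(($hh x : N))⟩
  have hinj : Function.Injective (LinearMap.compRight k (M := LinearMap.ker f) f) :=
    (LinearMap.injective_iff_surjective_of_finrank_eq_finrank
      (hfinrank.antisymm (LinearMap.finrank_le_finrank_of_surjective hsurj))).2 hsurj
  have hsubtype : (LinearMap.ker f).subtype = 0 :=
    hinj (LinearMap.ext fun x => by simp)
  exact hf (by rw [← (LinearMap.ker f).range_subtype, hsubtype, LinearMap.range_zero])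

lemma exists_ker_lt_ker [IsSemisimpleModule R N] {f : M →ₗ[R] N} (hf : LinearMap.ker f ≠ ⊥)
    (hfinrank : finrank k (LinearMap.ker f →ₗ[R] M) ≤ finrank k (LinearMap.ker f →ₗ[R] N)) :
    ∃ f' : M →ₗ[R] N, LinearMap.ker f' < LinearMap.ker f := by
  obtain ⟨g, hg⟩ := exists_linearMap_ker_not_range_le_range hf hfinrank
  obtain ⟨Q, hQ⟩ := exists_isCompl (LinearMap.ker f)
  obtain ⟨C, hC⟩ := exists_isCompl (LinearMap.range f)
  refine ⟨_, ker_add_subtype_comp_lt_ker (Submodule.projectionOnto_apply_left hQ) hC.disjoint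
    (g := C.projectionOnto _ hC.symm ∘ₗ g) fun hzero => hg ?_⟩
  rintro _ ⟨x, rfl⟩
  exact (Submodule.projectionOnto_apply_eq_zero_iff hC.symm).1 congr($hzero x)

theorem exists_injective_linearMap_of_finrank_linearMap_le [IsSemisimpleModule R N]
    [IsArtinian R M]
    (hfinrank : ∀ K : Submodule R M, finrank k (K →ₗ[R] M) ≤ finrank k (K →ₗ[R] N)) :
    ∃ f : M →ₗ[R] N, Function.Injective f := by
  obtain ⟨_, ⟨f, rfl⟩, hmin⟩ := (wellFounded_lt (α := Submodule R M)).has_min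
    (Set.range fun f : M →ₗ[R] N => LinearMap.ker f) ⟨_, 0, rfl⟩
  refine ⟨f, LinearMap.ker_eq_bot.1 (by_contra fun hf => ?_)⟩
  obtain ⟨f', hlt⟩ := exists_ker_lt_ker hf (hfinrank (LinearMap.ker f))
  exact hmin _ ⟨f', rfl⟩ hlt

end Embedding

section Character

open Representation
open scoped MonoidAlgebra

variable {k G V W : Type*} [Field k] [Group G]
  [AddCommGroup V] [Module k V] [AddCommGroup W] [Module k W]

/-- The `k[G]`-module attached to a subrepresentation of `ρ`, identified with the corresponding
submodule of the module attached to `ρ`. -/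
noncomputable def asModuleEquivAsSubmodule {ρ : Representation k G V} (τ : Subrepresentation ρ) :
    τ.toRepresentation.asModule ≃ₗ[k[G]] τ.asSubmodule :=
  .ofBijective
    ((IntertwiningMap.equivLinearMapAsModule τ.toRepresentation ρ
      ⟨τ.toSubmodule.subtype, fun _ => rfl⟩).codRestrict τ.asSubmodule fun x => x.2)
    ⟨fun _ _ hxy => Subtype.ext congr(($hxy : ρ.asModule)), fun x => ⟨x, rfl⟩⟩

lemma finrank_asSubmodule_linearMap_asModule {ρ : Representation k G V}
    (τ : Subrepresentation ρ) (σ : Representation k G W) :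
    finrank k (τ.asSubmodule →ₗ[k[G]] σ.asModule) =
      finrank k (τ.toRepresentation.IntertwiningMap σ) :=
  ((IntertwiningMap.equivLinearMapAsModule τ.toRepresentation σ).trans
    ((asModuleEquivAsSubmodule τ).congrLeft σ.asModule k)).finrank_eq.symm

variable [FiniteDimensional k V] [FiniteDimensional k W] [CharZero k]

lemma finrank_eq_of_character_eq {ρ : Representation k G V}
    {σ : Representation k G W} (h : ρ.character = σ.character) : finrank k V = finrank k W := by
  simpa using congrFun h 1

lemma finrank_intertwiningMap_eq_of_character_eq [Finite G] {U : Type*} [AddCommGroup U]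
    [Module k U] [FiniteDimensional k U] (τ : Representation k G U) {ρ : Representation k G V}
    {σ : Representation k G W} (h : ρ.character = σ.character) :
    finrank k (τ.IntertwiningMap ρ) = finrank k (τ.IntertwiningMap σ) := by
  have := Fintype.ofFinite G
  have : Invertible (Nat.card G : k) := invertibleOfNonzero (by simp)
  apply Nat.cast_injective (R := k)
  rw [← card_inv_mul_sum_char_mul_char_eq_finrank, h, card_inv_mul_sum_char_mul_char_eq_finrank]

theorem nonempty_equiv_of_character_eq [Finite G] {ρ : Representation k G V}
    {σ : Representation k G W} (h : ρ.character = σ.character) : Nonempty (ρ.Equiv σ) := by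
  have : NeZero (Nat.card G : k) := ⟨Nat.cast_ne_zero.2 Nat.card_pos.ne'⟩
  have : IsArtinian k[G] ρ.asModule := isArtinian_of_tower k inferInstance
  have : Module.Finite k (ρ.asModule →ₗ[k[G]] ρ.asModule) :=
    .equiv (IntertwiningMap.equivLinearMapAsModule ρ ρ)
  have : Module.Finite k (ρ.asModule →ₗ[k[G]] σ.asModule) :=
    .equiv (IntertwiningMap.equivLinearMapAsModule ρ σ)
  obtain ⟨f, hf⟩ := exists_injective_linearMap_of_finrank_linearMap_le (k := k) (R := k[G])
    (M := ρ.asModule) (N := σ.asModule) fun K => by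
      obtain ⟨τ, rfl⟩ := Subrepresentation.subrepresentationSubmoduleOrderIso.surjective K
      rw [Subrepresentation.subrepresentationSubmoduleOrderIso_apply,
        finrank_asSubmodule_linearMap_asModule, finrank_asSubmodule_linearMap_asModule,
        finrank_intertwiningMap_eq_of_character_eq _ h]
  let φ : ρ.IntertwiningMap σ := (IntertwiningMap.equivLinearMapAsModule ρ σ).symm f
  have hφ : Function.Injective φ.toLinearMap := hf
  exact ⟨φ.ofBijective ⟨hφ, (LinearMap.injective_iff_surjective_of_finrank_eq_finrank
    (finrank_eq_of_character_eq h)).1 hφ⟩⟩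

lemma finrank_eq_card_mul_finrank_invariants [Fintype G] {ρ : Representation k G V}
    (h : ∀ g : G, g ≠ 1 → ρ.character g = 0) :
    finrank k V = Fintype.card G * finrank k ρ.invariants := by
  have : Invertible (Nat.card G : k) := invertibleOfNonzero (by simp)
  have hmean := ρ.card_inv_mul_sum_char_eq_finrank
  rw [Fintype.sum_eq_single 1 h, char_one, inv_mul_eq_iff_eq_mul₀ (by simp),
    Nat.card_eq_fintype_card] at hmean
  exact_mod_cast hmean

end Character

section RegularRepresentation

variable {k G : Type u} {V : Type*}

/-- The direct sum of copies of a representation `ρ` on `V` indexed by `ι`, realized on the space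
of functions `ι → V` with `ρ` acting on the values. -/
def piRepresentation [CommSemiring k] [Monoid G] [AddCommMonoid V] [Module k V]
    (ι : Type*) (ρ : Representation k G V) : Representation k G (ι → V) where
  toFun g := (ρ g).compLeft ι
  map_one' := by ext; simp
  map_mul' g h := by ext; simp

lemma trace_compLeft [CommRing k] [AddCommGroup V] [Module k V] [Module.Free k V]
    [Module.Finite k V] (ι : Type*) [Fintype ι] (f : V →ₗ[k] V) :
    LinearMap.trace k (ι → V) (f.compLeft ι) = Fintype.card ι * LinearMap.trace k V f := by
  classical
  let b := Module.Free.chooseBasis k V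
  rw [LinearMap.trace_eq_matrix_trace k (Pi.basis fun _ : ι => b),
    LinearMap.trace_eq_matrix_trace k b, Matrix.trace, Fintype.sum_sigma]
  simp [LinearMap.toMatrix_apply, Matrix.trace, Pi.basis_repr, Pi.basis_apply]

variable [Field k] [Group G]

lemma character_piRepresentation [AddCommGroup V] [Module k V] [FiniteDimensional k V]
    (ι : Type*) [Fintype ι] (ρ : Representation k G V) (g : G) :
    (piRepresentation ι ρ).character g = Fintype.card ι * ρ.character g :=
  trace_compLeft ι (ρ g)

open TannakaDuality.FiniteGroup in
lemma character_leftRegular_of_ne_one [Finite G] {g : G} (hg : g ≠ 1) :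
    (leftRegular : Representation k G (G → k)).character g = 0 := by
  classical
  have := Fintype.ofFinite G
  rw [Representation.character, LinearMap.trace_eq_matrix_trace k (Pi.basisFun k G)]
  refine Finset.sum_eq_zero fun x _ => ?_
  simp [hg]

open TannakaDuality.FiniteGroup in
theorem stmt14_general [Fintype G] [CharZero k] [AddCommGroup V] [Module k V]
    [FiniteDimensional k V] (ρ : Representation k G V) (h : ∀ g : G, g ≠ 1 → ρ.character g = 0) :
    Fintype.card G ∣ finrank k V ∧
      Nonempty (ρ.Equiv (piRepresentation (Fin (finrank k V / Fintype.card G)) leftRegular)) := by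
  have hdvd : Fintype.card G ∣ finrank k V := ⟨_, finrank_eq_card_mul_finrank_invariants h⟩
  refine ⟨hdvd, nonempty_equiv_of_character_eq (funext fun g => ?_)⟩
  rcases eq_or_ne g 1 with rfl | hg
  · rw [character_piRepresentation, Representation.char_one, Representation.char_one,
      finrank_fintype_fun_eq_card, Fintype.card_fin, ← Nat.cast_mul, Nat.div_mul_cancel hdvd]
  · rw [h g hg, character_piRepresentation, character_leftRegular_of_ne_one hg, mul_zero]

end RegularRepresentation

/-- The isomorphism in `FDRep k G` given by an equivalence of unbundled representations. -/
noncomputable def fdRepIsoOfEquiv {k : Type u} {G : Type*} [Field k] [Monoid G] {V W : FDRep k G}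
    (e : Representation.Equiv V.ρ W.ρ) : V ≅ W :=
  Action.mkIso (LinearEquiv.toFGModuleCatIso e.toLinearEquiv) fun g => by
    ext v
    exact e.toIntertwiningMap.isIntertwining _ _ g v

/-- Let `G` be a finite group and `V` a finite-dimensional complex
representation of `G` whose character vanishes at every `g ≠ 1`. Then `|G|` divides
`dim_ℂ V`, and `V` is isomorphic to the direct sum of `dim_ℂ V / |G|` copies of the left
regular representation of `G`. -/
theorem stmt14 (G : Type) [Group G] [Fintype G] (V : FDRep ℂ G)
    (h : ∀ g : G, g ≠ 1 → V.character g = 0) :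
    Fintype.card G ∣ finrank ℂ V ∧
      Nonempty (V ≅ FDRep.of (regRepPow G (finrank ℂ V / Fintype.card G))) := by
  obtain ⟨hdvd, ⟨e⟩⟩ := stmt14_general V.ρ h
  -- `regRepPow G m` unfolds to `piRepresentation (Fin m) leftRegular`.
  exact ⟨hdvd, ⟨fdRepIsoOfEquiv e⟩⟩
end
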